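/- arXiv:2410.07729 — 2 statements merged into one kernel-verified Lean document; each statement's English description precedes it below -/
import Mathlib

section
/- Let n ≥ 2 be an integer and c a nonzero real number, with n odd or (n even and c < 0). Then the function f : ℂ → ℂ defined by f(x) = ∫₀^∞ e^{-(-c)^{n-1} w^n/n - c w x} dw satisfies the Scorer-type equation f^{(n-1)}(x) + c·x·f(x) = 1 for every x ∈ ℂ. -/
open MeasureTheory Real Set

open Filter Topology

/-- On `w ≥ 0`, a linear term is absorbed by a power of degree at least two. -/
theorem exists_linear_sub_pow_le {b M : ℝ} (hb : 0 < b) (hM : 0 ≤ M) {n : ℕ} (hn : 2 ≤ n) :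
    ∃ C : ℝ, ∀ w : ℝ, 0 ≤ w → -b * w ^ n + M * w ≤ C - w := by
  set T : ℝ := (M + 1) / b + 1 with hT
  have hT1 : 1 ≤ T := by
    have : 0 ≤ (M + 1) / b := by positivity
    linarith
  have hbT : M + 1 ≤ b * T := by
    have : b * T = M + 1 + b := by rw [hT]; field_simp
    linarith
  refine ⟨(M + 1) * T, fun w hw => ?_⟩
  rcases le_total w T with h | h
  · have h1 : 0 ≤ b * w ^ n := by positivity
    have h2 : (M + 1) * w ≤ (M + 1) * T := by gcongr
    linarith
  · have h1 : w ^ 2 ≤ w ^ n := pow_le_pow_right₀ (hT1.trans h) hn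
    have h2 : b * w ^ 2 ≤ b * w ^ n := by gcongr
    have h3 : b * T * w ≤ b * w * w := by gcongr
    have h4 : (M + 1) * w ≤ b * T * w := by gcongr
    have h5 : 0 ≤ (M + 1) * T := by positivity
    nlinarith

theorem norm_pow_mul_exp_neg_pow_le {b M C : ℝ} {n : ℕ}
    (hC : ∀ w : ℝ, 0 ≤ w → -b * w ^ n + M * w ≤ C - w) (k : ℕ) {s : ℂ} (hs : ‖s‖ ≤ M)
    {w : ℝ} (hw : 0 ≤ w) :
    ‖(w : ℂ) ^ k * Complex.exp (-b * (w : ℂ) ^ n + s * w)‖ ≤ rexp C * (w ^ k * rexp (-w)) := by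
  have hre : (-b * (w : ℂ) ^ n + s * w).re = -b * w ^ n + s.re * w := by
    have h : -b * (w : ℂ) ^ n = ((-b * w ^ n : ℝ) : ℂ) := by push_cast; ring
    rw [h, Complex.add_re, Complex.ofReal_re, Complex.re_mul_ofReal]
  rw [norm_mul, norm_pow, Complex.norm_real, Complex.norm_exp, hre, Real.norm_of_nonneg hw]
  have h1 : s.re * w ≤ M * w := by
    gcongr
    exact (Complex.re_le_norm s).trans hs
  have h2 : rexp (-b * w ^ n + s.re * w) ≤ rexp C * rexp (-w) := by
    rw [← Real.exp_add, Real.exp_le_exp]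
    linarith [hC w hw]
  calc w ^ k * rexp (-b * w ^ n + s.re * w) ≤ w ^ k * (rexp C * rexp (-w)) := by gcongr
    _ = _ := by ring

theorem integrableOn_pow_mul_exp_neg (k : ℕ) :
    IntegrableOn (fun w : ℝ => w ^ k * rexp (-w)) (Ioi 0) := by
  have h := integrableOn_rpow_mul_exp_neg_rpow (p := 1) (s := k)
    (by linarith [(Nat.cast_nonneg k : (0 : ℝ) ≤ k)]) one_pos
  simpa using h

theorem integrableOn_pow_mul_cexp_neg_pow {b : ℝ} (hb : 0 < b) {n : ℕ} (hn : 2 ≤ n) (k : ℕ)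
    (s : ℂ) :
    IntegrableOn (fun w : ℝ => (w : ℂ) ^ k * Complex.exp (-b * (w : ℂ) ^ n + s * w)) (Ioi 0) := by
  obtain ⟨C, hC⟩ := exists_linear_sub_pow_le hb (norm_nonneg s) hn
  refine ((integrableOn_pow_mul_exp_neg k).const_mul (rexp C)).mono'
    (Continuous.aestronglyMeasurable (by fun_prop)) ?_
  filter_upwards [ae_restrict_mem measurableSet_Ioi] with w hw
  exact norm_pow_mul_exp_neg_pow_le hC k le_rfl (le_of_lt hw)

theorem hasDerivAt_integral_pow_mul_cexp_neg_pow {b : ℝ} (hb : 0 < b) {n : ℕ} (hn : 2 ≤ n)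
    (k : ℕ) (s : ℂ) :
    HasDerivAt
      (fun s : ℂ => ∫ w in Ioi (0 : ℝ), (w : ℂ) ^ k * Complex.exp (-b * (w : ℂ) ^ n + s * w))
      (∫ w in Ioi (0 : ℝ), (w : ℂ) ^ (k + 1) * Complex.exp (-b * (w : ℂ) ^ n + s * w)) s := by
  obtain ⟨C, hC⟩ := exists_linear_sub_pow_le hb (by positivity : 0 ≤ ‖s‖ + 1) hn
  refine (hasDerivAt_integral_of_dominated_loc_of_deriv_le (Metric.ball_mem_nhds s one_pos)
    (F := fun (s : ℂ) (w : ℝ) => (w : ℂ) ^ k * Complex.exp (-b * (w : ℂ) ^ n + s * w))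
    (F' := fun (s : ℂ) (w : ℝ) => (w : ℂ) ^ (k + 1) * Complex.exp (-b * (w : ℂ) ^ n + s * w))
    (bound := fun w => rexp C * (w ^ (k + 1) * rexp (-w)))
    (.of_forall fun _ => Continuous.aestronglyMeasurable (by fun_prop))
    (integrableOn_pow_mul_cexp_neg_pow hb hn k s)
    (Continuous.aestronglyMeasurable (by fun_prop)) ?_
    ((integrableOn_pow_mul_exp_neg (k + 1)).const_mul (rexp C)) ?_).2
  · filter_upwards [ae_restrict_mem measurableSet_Ioi] with w hw t ht
    refine norm_pow_mul_exp_neg_pow_le hC (k + 1) ?_ (le_of_lt hw)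
    have h1 : ‖t - s‖ < 1 := mem_ball_iff_norm.1 ht
    have h2 := norm_le_norm_add_norm_sub' t s
    linarith
  · refine .of_forall fun w t _ => ?_
    have h := ((((hasDerivAt_id t).mul_const (w : ℂ)).const_add
      (-b * (w : ℂ) ^ n)).cexp).const_mul ((w : ℂ) ^ k)
    refine h.congr_deriv ?_
    simp only [id]
    ring

theorem integral_deriv_cexp_neg_pow {b : ℝ} (hb : 0 < b) {n : ℕ} (hn : 2 ≤ n) (s : ℂ) :
    n * b * (∫ w in Ioi (0 : ℝ), (w : ℂ) ^ (n - 1) * Complex.exp (-b * (w : ℂ) ^ n + s * w))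
      - s * (∫ w in Ioi (0 : ℝ), Complex.exp (-b * (w : ℂ) ^ n + s * w)) = 1 := by
  have hint (k : ℕ) := integrableOn_pow_mul_cexp_neg_pow hb hn k s
  have hint₀ : IntegrableOn (fun w : ℝ => Complex.exp (-b * (w : ℂ) ^ n + s * w)) (Ioi 0) := by
    simpa using hint 0
  have hderiv (w : ℝ) : HasDerivAt (fun w : ℝ => -Complex.exp (-b * (w : ℂ) ^ n + s * w))
      (n * b * ((w : ℂ) ^ (n - 1) * Complex.exp (-b * (w : ℂ) ^ n + s * w))
        - s * Complex.exp (-b * (w : ℂ) ^ n + s * w)) w := by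
    have h := ((((hasDerivAt_pow n (w : ℂ)).const_mul (-b : ℂ)).add
      ((hasDerivAt_id (w : ℂ)).const_mul s)).cexp).neg.comp_ofReal
    refine h.congr_deriv ?_
    simp only [id, Pi.add_apply]
    ring
  have hlim : Tendsto (fun w : ℝ => -Complex.exp (-b * (w : ℂ) ^ n + s * w)) atTop (𝓝 0) := by
    obtain ⟨C, hC⟩ := exists_linear_sub_pow_le hb (norm_nonneg s) hn
    have hexp : Tendsto (fun w : ℝ => rexp C * rexp (-w)) atTop (𝓝 0) := by
      simpa using (tendsto_exp_neg_atTop_nhds_zero.const_mul (rexp C))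
    refine squeeze_zero_norm' ?_ hexp
    filter_upwards [eventually_ge_atTop 0] with w hw
    simpa using norm_pow_mul_exp_neg_pow_le hC 0 le_rfl hw
  have h := integral_Ioi_of_hasDerivAt_of_tendsto' (a := 0) (fun w _ => hderiv w)
    (((hint (n - 1)).const_mul _).sub (hint₀.const_mul _)) hlim
  rw [integral_sub ((hint (n - 1)).const_mul _) (hint₀.const_mul _), integral_const_mul,
    integral_const_mul] at h
  rw [h]
  simp [show n ≠ 0 by omega]

theorem scorer_type_equation_f
    (n : ℕ) (hn : 2 ≤ n) (c : ℝ) (hc : c ≠ 0)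
    (hcase : Odd n ∨ (Even n ∧ c < 0))
    (f : ℂ → ℂ)
    (hf : ∀ x : ℂ, f x =
      ∫ w in Ioi (0 : ℝ),
        Complex.exp (-(-(c : ℂ)) ^ (n - 1) * (w : ℂ) ^ n / n - (c : ℂ) * w * x)) :
    ∀ x : ℂ, iteratedDeriv (n - 1) f x + (c : ℂ) * x * f x = 1 := by
  have hpos : 0 < (-c) ^ (n - 1) := by
    rcases hcase with h | ⟨-, h⟩
    · exact (Nat.Odd.sub_odd h odd_one).pow_pos (neg_ne_zero.2 hc)
    · exact pow_pos (neg_pos.2 h) _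
  have hn0 : (n : ℂ) ≠ 0 := by exact_mod_cast (show n ≠ 0 by omega)
  set b : ℝ := (-c) ^ (n - 1) / n with hb_def
  have hb : 0 < b := div_pos hpos (by exact_mod_cast (show 0 < n by omega))
  have hbn : (n : ℂ) * b = (-(c : ℂ)) ^ (n - 1) := by
    rw [hb_def]
    push_cast
    field_simp
  have hf' (x : ℂ) :
      f x = ∫ w in Ioi (0 : ℝ), Complex.exp (-b * (w : ℂ) ^ n + (-c * x) * w) := by
    rw [hf]
    congr 1 with w
    rw [← hbn]
    congr 1
    field_simp
    ring
  have hiter (k : ℕ) : iteratedDeriv k f = fun x : ℂ => (-(c : ℂ)) ^ k *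
      ∫ w in Ioi (0 : ℝ), (w : ℂ) ^ k * Complex.exp (-b * (w : ℂ) ^ n + (-c * x) * w) := by
    induction k with
    | zero => ext x; simp [hf']
    | succ k ih =>
      ext x
      rw [iteratedDeriv_succ, ih]
      have h := ((hasDerivAt_integral_pow_mul_cexp_neg_pow hb hn k (-c * x)).comp x
        ((hasDerivAt_id x).const_mul (-c : ℂ))).const_mul ((-(c : ℂ)) ^ k)
      refine h.deriv.trans ?_
      ring
  intro x
  have h := integral_deriv_cexp_neg_pow hb hn (-c * x)
  rw [hbn] at h
  rw [hiter, hf', ← h]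
  ring
end

section
/- Let m ≥ 1 be an integer and a a nonzero real number. Define u(t, x) = (1/π)·lim_{R→∞} ∫₀^R cos(x w + a t w^{2m+1}) dw for t > 0 and x ∈ ℝ. Then for every t > 0 and x ∈ ℝ, u satisfies the odd-order heat-type equation ∂u/∂t (t, x) = (-1)^m · a · ∂^{2m+1}u/∂x^{2m+1} (t, x). -/
open MeasureTheory Real Set Filter Topology

/-- The moments `∫₀^∞ r ^ k * exp (z r - c r ^ n) dr`. -/
noncomputable def expPowMoment (n k : ℕ) (c : ℝ) (z : ℂ) : ℂ :=
  ∫ r in Ioi (0 : ℝ), (r : ℂ) ^ k * Complex.exp (z * r - c * (r : ℂ) ^ n)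

lemma integrableOn_pow_mul_exp_sub_pow {n : ℕ} (hn : 2 ≤ n) (k : ℕ) {c : ℝ} (hc : 0 < c)
    (B : ℝ) :
    IntegrableOn (fun r : ℝ => r ^ k * Real.exp (B * r - c * r ^ n)) (Ioi 0) := by
  refine integrable_of_isBigO_exp_neg (b := 1) one_pos (by fun_prop) ?_
  refine Asymptotics.IsBigO.of_bound (k.factorial * Real.exp ((B + 2) ^ 2 / (4 * c))) ?_
  filter_upwards [eventually_ge_atTop (1 : ℝ)] with r hr
  have hr0 : 0 ≤ r := by linarith
  have h1 : r ^ k ≤ k.factorial * Real.exp r := by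
    have := Real.pow_div_factorial_le_exp r hr0 k
    rwa [div_le_iff₀' (by positivity)] at this
  have h2 : r ^ 2 ≤ r ^ n := pow_le_pow_right₀ hr hn
  have h3 : (B + 2) * r - c * r ^ 2 ≤ (B + 2) ^ 2 / (4 * c) := by
    rw [le_div_iff₀ (by positivity)]
    nlinarith [sq_nonneg (2 * c * r - (B + 2))]
  have h4 : c * r ^ 2 ≤ c * r ^ n := by gcongr
  rw [Real.norm_of_nonneg (by positivity), Real.norm_of_nonneg (by positivity), mul_assoc,
    ← Real.exp_add]
  calc r ^ k * Real.exp (B * r - c * r ^ n)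
      ≤ (k.factorial * Real.exp r) * Real.exp (B * r - c * r ^ n) := by gcongr
    _ = k.factorial * Real.exp (r + (B * r - c * r ^ n)) := by rw [mul_assoc, ← Real.exp_add]
    _ ≤ _ := by
      refine mul_le_mul_of_nonneg_left (Real.exp_le_exp.2 ?_) (by positivity)
      linarith

lemma norm_pow_mul_cexp_le (n k : ℕ) {c d B r : ℝ} {z : ℂ} (hd : d ≤ c) (hz : ‖z‖ ≤ B)
    (hr : 0 ≤ r) :
    ‖(r : ℂ) ^ k * Complex.exp (z * r - c * (r : ℂ) ^ n)‖
      ≤ r ^ k * Real.exp (B * r - d * r ^ n) := by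
  rw [norm_mul, norm_pow, Complex.norm_real, Real.norm_of_nonneg hr, Complex.norm_exp]
  have h1 : (z * r - c * (r : ℂ) ^ n).re = z.re * r - c * r ^ n := by
    rw [← Complex.ofReal_pow, Complex.sub_re, Complex.re_mul_ofReal, Complex.re_ofReal_mul,
      Complex.ofReal_re]
  rw [h1]
  have h2 : z.re ≤ B := (Complex.re_le_norm z).trans hz
  gcongr

lemma integrableOn_pow_mul_cexp {n : ℕ} (hn : 2 ≤ n) (k : ℕ) {c : ℝ} (hc : 0 < c) (z : ℂ) :
    IntegrableOn (fun r : ℝ => (r : ℂ) ^ k * Complex.exp (z * r - c * (r : ℂ) ^ n)) (Ioi 0) := by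
  refine Integrable.mono' (integrableOn_pow_mul_exp_sub_pow hn k hc ‖z‖)
    (Continuous.aestronglyMeasurable (by fun_prop)) ?_
  filter_upwards [ae_restrict_mem measurableSet_Ioi] with r hr
  exact norm_pow_mul_cexp_le n k le_rfl le_rfl (le_of_lt hr)

lemma hasDerivAt_expPowMoment {n : ℕ} (hn : 2 ≤ n) (k : ℕ) {c : ℝ} (hc : 0 < c) (z : ℂ) :
    HasDerivAt (expPowMoment n k c) (expPowMoment n (k + 1) c z) z := by
  refine (hasDerivAt_integral_of_dominated_loc_of_deriv_le (μ := volume.restrict (Ioi 0))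
    (F := fun (z : ℂ) (r : ℝ) => (r : ℂ) ^ k * Complex.exp (z * r - c * (r : ℂ) ^ n))
    (F' := fun (z : ℂ) (r : ℝ) => (r : ℂ) ^ (k + 1) * Complex.exp (z * r - c * (r : ℂ) ^ n))
    (bound := fun r : ℝ => r ^ (k + 1) * Real.exp ((‖z‖ + 1) * r - c * r ^ n))
    (Metric.ball_mem_nhds z one_pos) ?_ (integrableOn_pow_mul_cexp hn k hc z) ?_ ?_
    (integrableOn_pow_mul_exp_sub_pow hn (k + 1) hc _) ?_).2
  · exact Eventually.of_forall fun w => Continuous.aestronglyMeasurable (by fun_prop)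
  · exact Continuous.aestronglyMeasurable (by fun_prop)
  · filter_upwards [ae_restrict_mem measurableSet_Ioi] with r hr w hw
    refine norm_pow_mul_cexp_le n (k + 1) le_rfl ?_ (le_of_lt hr)
    have h1 : ‖w - z‖ < 1 := by simpa [dist_eq_norm] using hw
    have h2 : ‖w‖ ≤ ‖z‖ + ‖w - z‖ := by simpa using norm_add_le z (w - z)
    linarith
  · refine Eventually.of_forall fun r w _ => ?_
    have := ((((hasDerivAt_id w).mul_const (r : ℂ)).sub_const (c * (r : ℂ) ^ n)).cexp).const_mul
      ((r : ℂ) ^ k)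
    refine this.congr_deriv ?_
    simp only [id]
    ring

lemma hasDerivAt_expPowMoment_coeff {n : ℕ} (hn : 2 ≤ n) (k : ℕ) {c : ℝ} (hc : 0 < c) (z : ℂ) :
    HasDerivAt (fun c => expPowMoment n k c z) (-expPowMoment n (k + n) c z) c := by
  have key := (hasDerivAt_integral_of_dominated_loc_of_deriv_le (μ := volume.restrict (Ioi 0))
    (F := fun (c r : ℝ) => (r : ℂ) ^ k * Complex.exp (z * r - c * (r : ℂ) ^ n))
    (F' := fun (c r : ℝ) => -((r : ℂ) ^ (k + n) * Complex.exp (z * r - c * (r : ℂ) ^ n)))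
    (bound := fun r : ℝ => r ^ (k + n) * Real.exp (‖z‖ * r - c / 2 * r ^ n))
    (Ioi_mem_nhds (half_lt_self hc)) ?_ (integrableOn_pow_mul_cexp hn k hc z) ?_ ?_
    (integrableOn_pow_mul_exp_sub_pow hn (k + n) (half_pos hc) _) ?_).2
  · rw [integral_neg] at key
    exact key
  · exact Eventually.of_forall fun w => Continuous.aestronglyMeasurable (by fun_prop)
  · exact Continuous.aestronglyMeasurable (by fun_prop)
  · filter_upwards [ae_restrict_mem measurableSet_Ioi] with r hr w hw
    rw [norm_neg]
    exact norm_pow_mul_cexp_le n (k + n) (le_of_lt hw) le_rfl (le_of_lt hr)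
  · refine Eventually.of_forall fun r w _ => ?_
    have := ((((hasDerivAt_id w).ofReal_comp.mul_const ((r : ℂ) ^ n)).const_sub
      (z * r)).cexp).const_mul ((r : ℂ) ^ k)
    refine this.congr_deriv ?_
    simp only [id, Complex.ofReal_one]
    ring

lemma iteratedDeriv_re_mul_expPowMoment {n : ℕ} (hn : 2 ≤ n) {c : ℝ} (hc : 0 < c) (A w : ℂ)
    (k : ℕ) :
    iteratedDeriv k (fun x : ℝ => (A * expPowMoment n 0 c (w * x)).re)
      = fun x : ℝ => (A * w ^ k * expPowMoment n k c (w * x)).re := by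
  induction k with
  | zero => simp
  | succ k ih =>
    rw [iteratedDeriv_succ, ih]
    funext x
    have h1 : HasDerivAt (fun y : ℂ => A * w ^ k * expPowMoment n k c (w * y))
        (A * w ^ k * (expPowMoment n (k + 1) c (w * x) * (w * 1))) (x : ℂ) :=
      ((hasDerivAt_expPowMoment hn k hc (w * x)).comp (x : ℂ)
        ((hasDerivAt_id (x : ℂ)).const_mul w)).const_mul _
    rw [h1.real_of_complex.deriv]
    congr 1
    ring

lemma integral_mul_exp_neg_mul_le {R K α : ℝ} (hR : 0 ≤ R) (hK : 0 < K) :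
    ∫ θ in (0 : ℝ)..α, R * Real.exp (-K * θ) ≤ R / K := by
  have h : ∀ θ ∈ uIcc 0 α, HasDerivAt (fun θ => -(R / K) * Real.exp (-K * θ))
      (R * Real.exp (-K * θ)) θ := by
    intro θ _
    have := (((hasDerivAt_id θ).const_mul (-K)).exp).const_mul (-(R / K))
    refine this.congr_deriv ?_
    simp only [id]
    field_simp
  rw [intervalIntegral.integral_eq_sub_of_hasDerivAt h
    (Continuous.intervalIntegrable (by fun_prop) _ _)]
  have : 0 ≤ R / K * Real.exp (-K * α) := by positivity
  simp only [mul_zero, Real.exp_zero]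
  linarith

lemma norm_cexp_phase_circle_le {n : ℕ} (hn : 2 ≤ n) {c x R θ : ℝ} (hc : 0 < c) (hR : 0 ≤ R)
    (hθ : 0 ≤ θ) (hθ' : θ ≤ π / (2 * n)) :
    ‖Complex.exp (Complex.I * (x * (R * Complex.exp (θ * Complex.I))
        + c * (R * Complex.exp (θ * Complex.I)) ^ n))‖
      ≤ Real.exp (-(c * R ^ n - |x| * R) * θ) := by
  rw [Complex.norm_exp, mul_pow, ← Complex.exp_nat_mul, ← mul_assoc (n : ℂ)]
  have e1 : (Complex.exp (θ * Complex.I)).im = Real.sin θ := by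
    rw [Complex.exp_ofReal_mul_I_im]
  have e2 : (Complex.exp (n * θ * Complex.I)).im = Real.sin (n * θ) := by
    rw [← Complex.ofReal_natCast, ← Complex.ofReal_mul, Complex.exp_ofReal_mul_I_im]
  rw [Complex.I_mul_re, Complex.add_im, Complex.im_ofReal_mul, Complex.im_ofReal_mul, e1,
    Complex.im_ofReal_mul, ← Complex.ofReal_pow, Complex.im_ofReal_mul, e2]
  have hn1 : (2 : ℝ) ≤ n := by exact_mod_cast hn
  have hnθ : n * θ ≤ π / 2 := by
    rw [le_div_iff₀ (by positivity)] at hθ'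
    linarith
  have h1 : θ ≤ Real.sin (n * θ) := by
    refine le_trans ?_ (Real.mul_le_sin (by positivity) hnθ)
    rw [← mul_assoc]
    refine le_mul_of_one_le_left hθ ?_
    rw [div_mul_eq_mul_div, one_le_div Real.pi_pos]
    linarith [Real.pi_le_four]
  have h2 : |Real.sin θ| ≤ θ := by
    simpa only [abs_of_nonneg hθ] using Real.abs_sin_le_abs (x := θ)
  have h3 : -(|x| * R * θ) ≤ x * (R * Real.sin θ) := by
    have : |x * (R * Real.sin θ)| ≤ |x| * R * θ := by
      rw [abs_mul, abs_mul, abs_of_nonneg hR, mul_assoc]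
      gcongr
    exact (abs_le.1 this).1
  have h4 : c * (R ^ n * θ) ≤ c * (R ^ n * Real.sin (n * θ)) := by gcongr
  apply Real.exp_le_exp.2
  linarith


lemma tendsto_integral_cos_phase {n : ℕ} (hn : 2 ≤ n) {c : ℝ} (hc : 0 < c) (x : ℝ) {ζ : ℂ}
    (hζ : ζ = Complex.exp ((π / (2 * n) : ℝ) * Complex.I)) :
    Tendsto (fun R : ℝ => ∫ w in Ioc (0 : ℝ) R, Real.cos (x * w + c * w ^ n)) atTop
      (𝓝 (ζ * expPowMoment n 0 c (Complex.I * ζ * x)).re) := by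
  set α : ℝ := π / (2 * n) with hα
  have hn0 : (0 : ℝ) < n := by exact_mod_cast (by omega : 0 < n)
  have hα0 : 0 ≤ α := by positivity
  have hζn : ζ ^ n = Complex.I := by
    rw [hζ, ← Complex.exp_nat_mul]
    have : (n : ℂ) * ((α : ℂ) * Complex.I) = π / 2 * Complex.I := by
      have : (n : ℂ) ≠ 0 := by exact_mod_cast hn0.ne'
      rw [hα]
      push_cast
      field_simp
    rw [this, Complex.exp_pi_div_two_mul_I]
  set f : ℂ → ℂ := fun z => Complex.exp (Complex.I * (x * z + c * z ^ n)) with hf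
  have hfc : Continuous f := by fun_prop
  obtain ⟨F, hF⟩ := (show Differentiable ℂ f by fun_prop).isExactOn_univ
  replace hF : ∀ z, HasDerivAt F (f z) z := fun z => hF z (mem_univ z)
  have hreal : ∀ R : ℝ, ∫ w in (0 : ℝ)..R, f w = F R - F 0 := by
    intro R
    simpa using intervalIntegral.integral_eq_sub_of_hasDerivAt (a := 0) (b := R)
      (fun w _ => (hF w).comp_ofReal)
      (Continuous.intervalIntegrable (by fun_prop) _ _)
  have hray : ∀ R : ℝ, ∫ r in (0 : ℝ)..R, f (ζ * r) * ζ = F (ζ * R) - F 0 := by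
    intro R
    have h : ∀ r : ℝ, HasDerivAt (fun r : ℝ => F (ζ * r)) (f (ζ * r) * ζ) r := by
      intro r
      have := (HasDerivAt.comp (r : ℂ) (hF (ζ * r))
        ((hasDerivAt_id (r : ℂ)).const_mul ζ)).comp_ofReal
      simpa using this
    simpa using intervalIntegral.integral_eq_sub_of_hasDerivAt (a := 0) (b := R)
      (fun w _ => h w) (Continuous.intervalIntegrable (by fun_prop) _ _)
  have harc : ∀ R : ℝ, ∫ θ in (0 : ℝ)..α,
      f (R * Complex.exp (θ * Complex.I)) * (R * (Complex.exp (θ * Complex.I) * Complex.I))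
        = F (ζ * R) - F R := by
    intro R
    have h : ∀ θ : ℝ, HasDerivAt (fun θ : ℝ => F (R * Complex.exp (θ * Complex.I)))
        (f (R * Complex.exp (θ * Complex.I)) *
          (R * (Complex.exp (θ * Complex.I) * Complex.I))) θ := by
      intro θ
      have := (HasDerivAt.comp (θ : ℂ) (hF (R * Complex.exp (θ * Complex.I)))
        ((((hasDerivAt_id (θ : ℂ)).mul_const Complex.I).cexp).const_mul (R : ℂ))).comp_ofReal
      simpa using this
    rw [intervalIntegral.integral_eq_sub_of_hasDerivAt (fun θ _ => h θ)
      (Continuous.intervalIntegrable (by fun_prop) _ _), ← hζ, mul_comm ζ]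
    simp
  have hgrowth : Tendsto (fun R : ℝ => c * R ^ (n - 1) - |x|) atTop atTop := by
    refine tendsto_atTop_add_const_right _ _ (Tendsto.const_mul_atTop hc ?_)
    exact tendsto_pow_atTop (by omega)
  have harc0 : Tendsto (fun R : ℝ => F (ζ * R) - F R) atTop (𝓝 0) := by
    refine squeeze_zero_norm' ?_ hgrowth.inv_tendsto_atTop
    filter_upwards [hgrowth.eventually_gt_atTop 0, eventually_gt_atTop 0] with R hK hR
    have hpow : R ^ n = R * R ^ (n - 1) := by
      rw [← pow_succ', Nat.sub_add_cancel (by omega)]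
    have hK' : c * R ^ n - |x| * R = R * (c * R ^ (n - 1) - |x|) := by rw [hpow]; ring
    have hK0 : 0 < c * R ^ n - |x| * R := by rw [hK']; positivity
    rw [← harc R]
    refine (intervalIntegral.norm_integral_le_of_norm_le hα0 (Eventually.of_forall ?_)
      (Continuous.intervalIntegrable (by fun_prop) _ _)).trans
      ((integral_mul_exp_neg_mul_le hR.le hK0).trans_eq ?_)
    · intro θ hθ
      rw [norm_mul, norm_mul, norm_mul, Complex.norm_exp_ofReal_mul_I, Complex.norm_I,
        Complex.norm_real, Real.norm_of_nonneg hR.le, mul_one, mul_one, mul_comm]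
      gcongr
      exact norm_cexp_phase_circle_le hn hc hR.le hθ.1.le hθ.2
    · rw [hK', Pi.inv_apply]
      field_simp
  have hray_eq : ∀ r : ℝ, f (ζ * r) * ζ = ζ *
      ((r : ℂ) ^ 0 * Complex.exp (Complex.I * ζ * x * r - c * (r : ℂ) ^ n)) := by
    intro r
    rw [mul_comm, pow_zero, one_mul, hf]
    simp only [mul_pow, hζn]
    congr 2
    linear_combination (c * (r : ℂ) ^ n) * Complex.I_mul_I
  have hlim : Tendsto (fun R : ℝ => F (ζ * R) - F 0) atTop
      (𝓝 (ζ * expPowMoment n 0 c (Complex.I * ζ * x))) := by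
    have := (intervalIntegral_tendsto_integral_Ioi 0
      (integrableOn_pow_mul_cexp hn 0 hc (Complex.I * ζ * x)) tendsto_id).const_mul ζ
    refine this.congr fun R => ?_
    rw [← hray R, ← intervalIntegral.integral_const_mul]
    exact intervalIntegral.integral_congr fun r _ => (hray_eq r).symm
  have hlim' : Tendsto (fun R : ℝ => F R - F 0) atTop
      (𝓝 (ζ * expPowMoment n 0 c (Complex.I * ζ * x))) := by
    simpa using hlim.sub harc0
  refine ((Complex.continuous_re.tendsto _).comp hlim').congr' ?_
  filter_upwards [eventually_ge_atTop 0] with R hR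
  rw [Function.comp_apply, ← hreal R, intervalIntegral.integral_of_le hR]
  have hfint : Integrable (fun w : ℝ => f w) (volume.restrict (Ioc 0 R)) :=
    (Continuous.integrableOn_Icc (by fun_prop)).mono_set Ioc_subset_Icc_self
  refine (integral_re hfint).symm.trans (integral_congr_ae (Eventually.of_forall fun w => ?_))
  have : Complex.I * (x * w + c * (w : ℂ) ^ n) = ((x * w + c * w ^ n : ℝ) : ℂ) * Complex.I := by
    push_cast
    ring
  simp only [hf, this]
  exact Complex.exp_ofReal_mul_I_re _

theorem odd_order_heat_type_equation
    (m : ℕ) (hm : 1 ≤ m) (a : ℝ) (ha : a ≠ 0)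
    (u : ℝ → ℝ → ℝ)
    (hu : ∀ t : ℝ, 0 < t → ∀ x : ℝ, Tendsto
      (fun R : ℝ => ∫ w in Ioc (0 : ℝ) R, Real.cos (x * w + a * t * w ^ (2 * m + 1)))
      atTop (𝓝 (π * u t x))) :
    ∀ t : ℝ, 0 < t → ∀ x : ℝ,
      deriv (fun s : ℝ => u s x) t
        = (-1 : ℝ) ^ m * a * iteratedDeriv (2 * m + 1) (fun z : ℝ => u t z) x := by
  have hn : 2 ≤ 2 * m + 1 := by omega
  generalize hζ : Complex.exp ((π / (2 * (2 * m + 1 : ℕ)) : ℝ) * Complex.I) = ζ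
  have hζn : ζ ^ (2 * m + 1) = Complex.I := by
    rw [← hζ, ← Complex.exp_nat_mul]
    refine Eq.trans (congrArg Complex.exp ?_) Complex.exp_pi_div_two_mul_I
    have : ((2 * m + 1 : ℕ) : ℂ) ≠ 0 := by exact_mod_cast (by omega : 2 * m + 1 ≠ 0)
    rw [Complex.ofReal_div, Complex.ofReal_mul, Complex.ofReal_natCast]
    push_cast at this ⊢
    field_simp
  obtain ⟨σ, b, hb, hσ, hab⟩ : ∃ σ b : ℝ, 0 < b ∧ σ * σ = 1 ∧ a = σ * b := by
    rcases lt_or_gt_of_ne ha with h | h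
    · exact ⟨-1, -a, by linarith, by norm_num, by ring⟩
    · exact ⟨1, a, h, by norm_num, by ring⟩
  have hσn : σ ^ (2 * m + 1) = σ := by rw [pow_succ, pow_mul, pow_two, hσ, one_pow, one_mul]
  have hrep : ∀ t : ℝ, 0 < t → ∀ x : ℝ, u t x =
      (((π⁻¹ : ℝ) * ζ) * expPowMoment (2 * m + 1) 0 (b * t) (Complex.I * ζ * σ * x)).re := by
    intro t ht x
    have h := tendsto_integral_cos_phase hn (mul_pos hb ht) (σ * x) hζ.symm
    have hcos : ∀ w : ℝ, Real.cos (σ * x * w + b * t * w ^ (2 * m + 1))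
        = Real.cos (x * w + a * t * w ^ (2 * m + 1)) := by
      intro w
      rcases mul_self_eq_one_iff.1 hσ with h | h
      · rw [hab, h]
        ring_nf
      · rw [hab, h, ← Real.cos_neg]
        ring_nf
    simp only [hcos] at h
    have h2 := tendsto_nhds_unique (hu t ht x) h
    rw [mul_assoc, Complex.re_ofReal_mul, eq_inv_mul_iff_mul_eq₀ Real.pi_ne_zero, h2]
    push_cast
    ring_nf
  intro t ht x
  have hspace : (fun z : ℝ => u t z) = fun z : ℝ =>
      (((π⁻¹ : ℝ) * ζ) * expPowMoment (2 * m + 1) 0 (b * t) (Complex.I * ζ * σ * z)).re :=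
    funext (hrep t ht)
  have htime : (fun s : ℝ => u s x) =ᶠ[𝓝 t] fun s : ℝ =>
      (((π⁻¹ : ℝ) * ζ) * expPowMoment (2 * m + 1) 0 (b * s) (Complex.I * ζ * σ * x)).re := by
    filter_upwards [Ioi_mem_nhds ht] with s hs using hrep s hs x
  have hd := ((hasDerivAt_expPowMoment_coeff hn 0 (mul_pos hb ht)
    (Complex.I * ζ * σ * x)).scomp t ((hasDerivAt_id t).const_mul b)).const_mul
      (((π⁻¹ : ℝ) : ℂ) * ζ)
  have hre := Complex.reCLM.hasFDerivAt.comp_hasDerivAt t hd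
  rw [htime.deriv_eq, hspace,
    iteratedDeriv_re_mul_expPowMoment hn (mul_pos hb ht) _ _ (2 * m + 1)]
  refine hre.deriv.trans ?_
  have hI : Complex.I ^ (2 * m + 1) = (((-1 : ℝ) ^ m : ℝ) : ℂ) * Complex.I := by
    rw [pow_succ, pow_mul, Complex.I_sq]
    push_cast
    rfl
  have hsq : ((-1 : ℝ) ^ m) * ((-1 : ℝ) ^ m) = 1 := by rw [← mul_pow]; norm_num
  rw [mul_pow, mul_pow, hζn, hI, ← Complex.ofReal_pow, hσn, ← Complex.re_ofReal_mul, zero_add,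
    Complex.reCLM_apply]
  congr 1
  generalize expPowMoment (2 * m + 1) (2 * m + 1) (b * t) (Complex.I * ζ * σ * x) = E
  have hsq' : (((-1 : ℝ) ^ m : ℝ) : ℂ) * (((-1 : ℝ) ^ m : ℝ) : ℂ) = 1 := by exact_mod_cast hsq
  have hσ' : (σ : ℂ) * σ = 1 := by exact_mod_cast hσ
  generalize ((-1 : ℝ) ^ m) = e at hsq' ⊢
  rw [hab]
  simp only [mul_one, Complex.real_smul, Complex.ofReal_mul]
  generalize ((π⁻¹ : ℝ) : ℂ) = p
  linear_combination (-p * ζ * b * E * e * e * σ * σ) * Complex.I_mul_I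
    + (p * ζ * b * E * e * e) * hσ' + (p * ζ * b * E) * hsq'
end
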